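/- Let r ≥ 1 and V ∈ C(X^r). For any words 𝒙 = (x₁,…,x_r) and 𝒙' = (x'₁,…,x'_r) in X^r sharing the same last letter, x_r = x'_r, any k ≥ r, and any nonnegative f ∈ C(X^r), one has (𝔓_k^V(r) f)(𝒙) ≤ exp(2r‖V‖∞) · (𝔓_k^V(r) f)(𝒙'). In particular, for strictly positive f, |log (𝔓_k^V(r) f)(𝒙) − log (𝔓_k^V(r) f)(𝒙')| ≤ 2r‖V‖∞ for all k ≥ r. -/

import Mathlib

/-!
A word and another one that differ only in their first `m` letters have, after appending a common
letter, images that differ only in their first `m - 1` letters, because appending drops the first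
letter. If moreover they share their last letter, the law of the appended letter is the same, so one
application of the operator costs only the factor `e^{2‖V‖}` coming from the two weights `e^V`
(`FKword_iterate_le`). After at most `n` steps two words of length `n + 1` with the same last letter
have become equal. This gives the bound with `e^{2n‖V‖}`, hence with `e^{2(n+1)‖V‖}`.

The integrals have to be genuine rather than junk values, so it is also shown that the operator
preserves continuity (`continuous_FKword`, by the Feller property) and, for the logarithms, strict
positivity (`FKword_pos`).
-/

open MeasureTheory Filter Topology

/-- Shift a word `(x₁,…,x_r)` by appending a new last letter: `(x₂,…,x_r,y)`. -/
def wordPush {X : Type*} {n : ℕ} (x : Fin (n + 1) → X) (y : X) : Fin (n + 1) → X :=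
  Fin.snoc (fun i : Fin n => x i.succ) y

/-- The word Feynman–Kac operator `𝔓₁^V(r)` (here `r = n+1`):
`(𝔓₁^V(r) f)(x₁,…,x_r) = ∫ e^{V(x₂,…,x_r,y)} f(x₂,…,x_r,y) P(x_r, dy)`. -/
noncomputable def FKword {X : Type*} [MeasurableSpace X] (P : X → Measure X) {n : ℕ}
    (V : (Fin (n + 1) → X) → ℝ) (f : (Fin (n + 1) → X) → ℝ) : (Fin (n + 1) → X) → ℝ :=
  fun x => ∫ y, Real.exp (V (wordPush x y)) * f (wordPush x y) ∂(P (x (Fin.last n)))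

theorem continuous_wordPush {X : Type*} [TopologicalSpace X] {n : ℕ} :
    Continuous fun p : (Fin (n + 1) → X) × X => wordPush p.1 p.2 := by
  unfold wordPush
  exact Continuous.finSnoc (by fun_prop) continuous_snd

theorem integrable_of_continuous {X : Type*} [MetricSpace X] [CompactSpace X]
    [MeasurableSpace X] [BorelSpace X] (μ : Measure X) [IsProbabilityMeasure μ]
    {g : X → ℝ} (hg : Continuous g) : Integrable g μ :=
  hg.integrable_of_hasCompactSupport (HasCompactSupport.of_compactSpace g)

/-- A Feller family integrates jointly continuously: `‖φ - φ₀‖` controls the change of integrand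
uniformly in the measure, and the Feller property controls the change of measure. -/
theorem continuous_integral_feller {X W : Type*} [MetricSpace X] [CompactSpace X]
    [MeasurableSpace X] [BorelSpace X] [TopologicalSpace W]
    (P : X → Measure X) (hP : ∀ x, IsProbabilityMeasure (P x))
    (hFeller : ∀ f : C(X, ℝ), Continuous fun x => ∫ y, f y ∂(P x))
    (h : W → X → ℝ) (hh : Continuous fun p : W × X => h p.1 p.2)
    (z : W → X) (hz : Continuous z) :
    Continuous fun w => ∫ y, h w y ∂(P (z w)) := by
  let H : C(W, C(X, ℝ)) := ContinuousMap.curry ⟨fun p : W × X => h p.1 p.2, hh⟩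
  have hH : ∀ w y, H w y = h w y := fun _ _ => rfl
  simp only [← hH]
  rw [continuous_iff_continuousAt]
  intro w₀
  have h1 : Tendsto (fun w => ∫ y, H w₀ y ∂(P (z w))) (𝓝 w₀) (𝓝 (∫ y, H w₀ y ∂(P (z w₀)))) :=
    ((hFeller (H w₀)).comp hz).tendsto w₀
  have h2 : Tendsto (fun w => ∫ y, (H w - H w₀) y ∂(P (z w))) (𝓝 w₀) (𝓝 0) := by
    have hn : Tendsto (fun w => ‖H w - H w₀‖) (𝓝 w₀) (𝓝 0) := by
      have : Continuous fun w => ‖H w - H w₀‖ := by fun_prop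
      simpa using this.tendsto w₀
    refine squeeze_zero_norm (fun w => ?_) hn
    have := hP (z w)
    simpa using norm_integral_le_of_norm_le_const (μ := P (z w))
      (Eventually.of_forall fun y => (H w - H w₀).norm_coe_le_norm y)
  have h3 := h2.add h1
  rw [zero_add] at h3
  refine h3.congr fun w => ?_
  have := hP (z w)
  rw [← integral_add (integrable_of_continuous _ (H w - H w₀).continuous)
    (integrable_of_continuous _ (H w₀).continuous)]
  simp

theorem continuous_FKword_integrand {X : Type*} [TopologicalSpace X] {n : ℕ} (V : C((Fin (n + 1) → X), ℝ))
    {g : (Fin (n + 1) → X) → ℝ} (hg : Continuous g) :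
    Continuous fun p : (Fin (n + 1) → X) × X =>
      Real.exp (V (wordPush p.1 p.2)) * g (wordPush p.1 p.2) :=
  (Real.continuous_exp.comp (V.continuous.comp continuous_wordPush)).mul
    (hg.comp continuous_wordPush)

theorem FKword_iterate_nonneg {X : Type*} [TopologicalSpace X] [MeasurableSpace X]
    (P : X → Measure X)
    {n : ℕ} (V f : C((Fin (n + 1) → X), ℝ)) (hf : ∀ w, 0 ≤ f w) (k : ℕ)
    (x : Fin (n + 1) → X) : 0 ≤ (FKword P V)^[k] f x := by
  induction k generalizing x with
  | zero => exact hf x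
  | succ k ih =>
    rw [Function.iterate_succ_apply']
    exact integral_nonneg fun y => mul_nonneg (Real.exp_pos _).le (ih _)

section

variable {X : Type*} [MetricSpace X] [CompactSpace X] [MeasurableSpace X] [BorelSpace X]

theorem integrable_FKword (P : X → Measure X) (hP : ∀ x, IsProbabilityMeasure (P x))
    {n : ℕ} (V : C((Fin (n + 1) → X), ℝ)) {g : (Fin (n + 1) → X) → ℝ} (hg : Continuous g)
    (x : Fin (n + 1) → X) (z : X) :
    Integrable (fun y => Real.exp (V (wordPush x y)) * g (wordPush x y)) (P z) :=
  have := hP z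
  integrable_of_continuous _
    ((continuous_FKword_integrand V hg).comp (Continuous.prodMk_right x))

theorem continuous_FKword (P : X → Measure X) (hP : ∀ x, IsProbabilityMeasure (P x))
    (hFeller : ∀ f : C(X, ℝ), Continuous fun x => ∫ y, f y ∂(P x))
    {n : ℕ} (V : C((Fin (n + 1) → X), ℝ)) {g : (Fin (n + 1) → X) → ℝ} (hg : Continuous g) :
    Continuous (FKword P V g) :=
  continuous_integral_feller P hP hFeller
    (fun x y => Real.exp (V (wordPush x y)) * g (wordPush x y))
    (continuous_FKword_integrand V hg) _ (continuous_apply (Fin.last n))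

theorem continuous_FKword_iterate (P : X → Measure X) (hP : ∀ x, IsProbabilityMeasure (P x))
    (hFeller : ∀ f : C(X, ℝ), Continuous fun x => ∫ y, f y ∂(P x))
    {n : ℕ} (V f : C((Fin (n + 1) → X), ℝ)) (k : ℕ) :
    Continuous ((FKword P V)^[k] f) := by
  induction k with
  | zero => exact f.continuous
  | succ k ih =>
    rw [Function.iterate_succ_apply']
    exact continuous_FKword P hP hFeller V ih

theorem FKword_pos (P : X → Measure X) (hP : ∀ x, IsProbabilityMeasure (P x))
    {n : ℕ} (V : C((Fin (n + 1) → X), ℝ)) {g : (Fin (n + 1) → X) → ℝ} (hg : Continuous g)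
    (hpos : ∀ w, 0 < g w) (x : Fin (n + 1) → X) : 0 < FKword P V g x := by
  have := hP (x (Fin.last n))
  have hp : ∀ y, 0 < Real.exp (V (wordPush x y)) * g (wordPush x y) :=
    fun y => mul_pos (Real.exp_pos _) (hpos _)
  refine (integral_pos_iff_support_of_nonneg (fun y => (hp y).le)
    (integrable_FKword P hP V hg x _)).2 ?_
  have hs : Function.support (fun y => Real.exp (V (wordPush x y)) * g (wordPush x y)) =
      Set.univ := Set.eq_univ_of_forall fun y => (hp y).ne'
  simp [hs]

theorem FKword_iterate_pos (P : X → Measure X) (hP : ∀ x, IsProbabilityMeasure (P x))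
    (hFeller : ∀ f : C(X, ℝ), Continuous fun x => ∫ y, f y ∂(P x))
    {n : ℕ} (V f : C((Fin (n + 1) → X), ℝ)) (hf : ∀ w, 0 < f w) (k : ℕ)
    (x : Fin (n + 1) → X) : 0 < (FKword P V)^[k] f x := by
  induction k generalizing x with
  | zero => exact hf x
  | succ k ih =>
    rw [Function.iterate_succ_apply']
    exact FKword_pos P hP V (continuous_FKword_iterate P hP hFeller V f k) ih x

/-- Appending a common letter to two words shortens by one the initial segment on which they
differ. -/
theorem wordPush_agree {Y : Type*} {n m : ℕ} {x x' : Fin (n + 1) → Y}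
    (h : ∀ i : Fin (n + 1), m + 1 ≤ (i : ℕ) → x i = x' i) (y : Y)
    (i : Fin (n + 1)) (hi : m ≤ (i : ℕ)) : wordPush x y i = wordPush x' y i := by
  unfold wordPush
  induction i using Fin.lastCases with
  | last => simp
  | cast i =>
    simp only [Fin.snoc_castSucc]
    exact h _ (by simpa using hi)

/-- The comparison for words that differ only in their first `m ≤ n` letters, after at least `m`
steps; the coupling time is `m`, and each step before it costs a factor `e^{2‖V‖}`. -/
theorem FKword_iterate_le (P : X → Measure X) (hP : ∀ x, IsProbabilityMeasure (P x))
    (hFeller : ∀ f : C(X, ℝ), Continuous fun x => ∫ y, f y ∂(P x))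
    {n : ℕ} (V f : C((Fin (n + 1) → X), ℝ)) (hf : ∀ w, 0 ≤ f w)
    (m : ℕ) (hm : m ≤ n) (k : ℕ) (hk : m ≤ k) (x x' : Fin (n + 1) → X)
    (h : ∀ i : Fin (n + 1), m ≤ (i : ℕ) → x i = x' i) :
    (FKword P V)^[k] f x ≤ Real.exp (2 * m * ‖V‖) * (FKword P V)^[k] f x' := by
  induction m generalizing k x x' with
  | zero =>
    obtain rfl : x = x' := funext fun i => h i (Nat.zero_le _)
    simp
  | succ m ih =>
    obtain ⟨k, rfl⟩ : ∃ j, k = j + 1 := ⟨k - 1, by omega⟩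
    rw [Function.iterate_succ_apply']
    have hc := continuous_FKword_iterate P hP hFeller V f k
    set g := (FKword P V)^[k] f with hg
    have hl : x (Fin.last n) = x' (Fin.last n) := h _ (by simpa using hm)
    unfold FKword
    rw [hl, ← integral_const_mul]
    refine integral_mono (integrable_FKword P hP V hc x _)
      ((integrable_FKword P hP V hc x' _).const_mul _) fun y => ?_
    have hgy : g (wordPush x y) ≤ Real.exp (2 * m * ‖V‖) * g (wordPush x' y) :=
      ih (by omega) k (by omega) _ _ (wordPush_agree h y)
    have h1 := abs_le.1 (V.norm_coe_le_norm (wordPush x y))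
    have h2 := abs_le.1 (V.norm_coe_le_norm (wordPush x' y))
    calc Real.exp (V (wordPush x y)) * g (wordPush x y)
        ≤ Real.exp (2 * ‖V‖ + V (wordPush x' y)) *
            (Real.exp (2 * m * ‖V‖) * g (wordPush x' y)) := by
          refine mul_le_mul (Real.exp_le_exp.2 (by linarith [h1.2, h2.1])) hgy
            (FKword_iterate_nonneg P V f hf k _) (Real.exp_pos _).le
      _ = Real.exp (2 * (m + 1 : ℕ) * ‖V‖) *
            (Real.exp (V (wordPush x' y)) * g (wordPush x' y)) := by
          rw [← mul_assoc, ← mul_assoc, ← Real.exp_add, ← Real.exp_add]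
          congr 2
          push_cast
          ring

/-- The comparison for words with the same last letter, with the constant `2(n+1)‖V‖`. -/
theorem FKword_iterate_le_of_last (P : X → Measure X) (hP : ∀ x, IsProbabilityMeasure (P x))
    (hFeller : ∀ f : C(X, ℝ), Continuous fun x => ∫ y, f y ∂(P x))
    {n : ℕ} (V f : C((Fin (n + 1) → X), ℝ)) (hf : ∀ w, 0 ≤ f w)
    (k : ℕ) (hk : n + 1 ≤ k) (x x' : Fin (n + 1) → X)
    (hlast : x (Fin.last n) = x' (Fin.last n)) :
    (FKword P V)^[k] f x ≤ Real.exp (2 * (n + 1) * ‖V‖) * (FKword P V)^[k] f x' := by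
  have hagree : ∀ i : Fin (n + 1), n ≤ (i : ℕ) → x i = x' i := fun i hi => by
    obtain rfl : i = Fin.last n := Fin.ext (by simp; omega)
    exact hlast
  refine (FKword_iterate_le P hP hFeller V f hf n le_rfl k (by omega) x x' hagree).trans ?_
  have h0 := FKword_iterate_nonneg P V f hf k x'
  gcongr
  linarith

end

/-- A multiplicative comparison of positive numbers is a bound on the difference of logarithms. -/
theorem log_sub_log_le {a b c : ℝ} (ha : 0 < a) (hb : 0 < b) (h : a ≤ Real.exp c * b) :
    Real.log a - Real.log b ≤ c := by
  have := Real.log_le_log ha h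
  rw [Real.log_mul (Real.exp_pos c).ne' hb.ne', Real.log_exp] at this
  linarith

/-- For words `𝒙, 𝒙'` of length `r = n+1 ≥ 1` with the same last
letter, all `k ≥ r` and nonnegative continuous `f`, one has
`(𝔓_k^V(r) f)(𝒙) ≤ e^{2r‖V‖∞} (𝔓_k^V(r) f)(𝒙')`; for strictly positive `f`,
`|log (𝔓_k^V(r) f)(𝒙) − log (𝔓_k^V(r) f)(𝒙')| ≤ 2r‖V‖∞`. -/
theorem stmt16
    {X : Type*} [MetricSpace X] [CompactSpace X] [Nonempty X]
    [MeasurableSpace X] [BorelSpace X]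
    (P : X → Measure X) (hP : ∀ x, IsProbabilityMeasure (P x))
    (hFeller : ∀ f : C(X, ℝ), Continuous fun x => ∫ y, f y ∂(P x))
    (n : ℕ) (V : C((Fin (n + 1) → X), ℝ))
    (x x' : Fin (n + 1) → X) (hlast : x (Fin.last n) = x' (Fin.last n))
    (k : ℕ) (hk : n + 1 ≤ k) :
    (∀ f : C((Fin (n + 1) → X), ℝ), (∀ w, 0 ≤ f w) →
      (FKword P ⇑V)^[k] ⇑f x ≤
        Real.exp (2 * (n + 1) * ‖V‖) * (FKword P ⇑V)^[k] ⇑f x') ∧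
    (∀ f : C((Fin (n + 1) → X), ℝ), (∀ w, 0 < f w) →
      |Real.log ((FKword P ⇑V)^[k] ⇑f x) - Real.log ((FKword P ⇑V)^[k] ⇑f x')| ≤
        2 * (n + 1) * ‖V‖) := by
  refine ⟨fun f hf => FKword_iterate_le_of_last P hP hFeller V f hf k hk x x' hlast,
    fun f hf => abs_sub_le_iff.2 ⟨?_, ?_⟩⟩
  · exact log_sub_log_le (FKword_iterate_pos P hP hFeller V f hf k x)
      (FKword_iterate_pos P hP hFeller V f hf k x')
      (FKword_iterate_le_of_last P hP hFeller V f (fun w => (hf w).le) k hk x x' hlast)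
  · exact log_sub_log_le (FKword_iterate_pos P hP hFeller V f hf k x')
      (FKword_iterate_pos P hP hFeller V f hf k x)
      (FKword_iterate_le_of_last P hP hFeller V f (fun w => (hf w).le) k hk x' x hlast.symm)
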